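/- arXiv:2310.01757 — 2 statements merged into one kernel-verified Lean document; each statement's English description precedes it below -/
import Mathlib

section
/- For all i, j ≤ ℓ, the cAr directions satisfy p_iᵀA²p_j ≥ 0. -/
open Matrix

/-!
The method is conjugate gradients for the inner product `B u v = uᵀA³v`: the residuals are
`B`-orthogonal, so `r_iᵀA³r_j ≥ 0`, and the coefficients `α_k`, `β_k` are nonnegative. The
recurrence for `p` writes each direction as a nonnegative combination of residuals. As `r_ℓ = 0`,
the recurrence for `r` writes each residual as a nonnegative combination of the vectors `A p_k`,
hence of the vectors `A r_k`. Thus `r_iᵀA²r_j` is a nonnegative combination of the numbers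
`r_iᵀA³r_k ≥ 0`, and `p_iᵀA²p_j` in turn of the numbers `r_kᵀA²r_m`.
-/

section BilinForm

variable {R M : Type*} [CommRing R] [AddCommGroup M] [Module R M] {C : LinearMap.BilinForm R M}
  {T : Module.End R M}

theorem bilinForm_isSelfAdjoint_pow (hT : C.IsSelfAdjoint T) (s : ℕ) :
    C.IsSelfAdjoint ⇑(T ^ s) := by
  induction s with
  | zero => exact LinearMap.isAdjointPair_one
  | succ s ih =>
    have hmul : LinearMap.IsAdjointPair C C ⇑(T ^ s * T) ⇑(T * T ^ s) := ih.mul hT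
    rwa [← pow_succ, ← pow_succ'] at hmul

theorem isSymm_compRight_pow (hC : C.IsSymm) (hT : C.IsSelfAdjoint T) (s : ℕ) :
    (C.compRight (T ^ s)).IsSymm where
  eq u v := by
    rw [LinearMap.BilinForm.compRight_apply, LinearMap.BilinForm.compRight_apply,
      ← bilinForm_isSelfAdjoint_pow hT s, hC.eq]

theorem isSelfAdjoint_compRight_pow (hT : C.IsSelfAdjoint T) (s : ℕ) :
    (C.compRight (T ^ s)).IsSelfAdjoint T := by
  intro u v
  rw [LinearMap.BilinForm.compRight_apply, LinearMap.BilinForm.compRight_apply, hT,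
    ← Module.End.mul_apply, ← Module.End.mul_apply, ← pow_succ, ← pow_succ']

end BilinForm

theorem bilinForm_self_nonneg_of_pos {R M : Type*} [CommRing R] [PartialOrder R] [AddCommGroup M]
    [Module R M] {B : LinearMap.BilinForm R M} (hB : ∀ u ≠ 0, 0 < B u u) (u : M) : 0 ≤ B u u := by
  obtain rfl | hu := eq_or_ne u 0
  · rw [map_zero]
  · exact (hB u hu).le

/-- The recurrences shared by methods of conjugate-gradient type, with residuals `r`, directions `p`
and arbitrary coefficients `α`, `β`. The approximate solutions are left out: they do not influence
the other sequences. -/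
structure IsCoupledRecurrence {R M : Type*} [CommRing R] [AddCommGroup M] [Module R M]
    (T : Module.End R M) (r p : ℕ → M) (α β : ℕ → R) : Prop where
  p_zero : p 0 = r 0
  r_succ : ∀ k, r (k + 1) = r k - α k • T (p k)
  p_succ : ∀ k, p (k + 1) = r (k + 1) + β k • p k

namespace IsCoupledRecurrence

variable {R M : Type*} [CommRing R] [AddCommGroup M] [Module R M] {T : Module.End R M}
  {r p : ℕ → M} {α β : ℕ → R}

theorem bilin_r_map_p_eq (h : IsCoupledRecurrence T r p α β)
    {B : LinearMap.BilinForm R M} {k : ℕ} (hconj : ∀ i < k, B (p i) (T (p k)) = 0)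
    {i : ℕ} (hi : i ≤ k) : B (r i) (T (p k)) = B (p i) (T (p k)) := by
  cases i with
  | zero => rw [h.p_zero]
  | succ i =>
    rw [h.p_succ, LinearMap.map_add₂, LinearMap.map_smul₂, hconj i hi, smul_zero, add_zero]

theorem mul_bilin_p_map (h : IsCoupledRecurrence T r p α β) {B : LinearMap.BilinForm R M}
    (hT : B.IsSelfAdjoint T) (i : ℕ) (v : M) :
    α i * B (p i) (T v) = B (r i) v - B (r (i + 1)) v := by
  rw [h.r_succ, LinearMap.map_sub₂, LinearMap.map_smul₂, smul_eq_mul, hT, sub_sub_cancel]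

variable [PartialOrder R] [IsOrderedRing R] {ℓ : ℕ}

theorem apply_p_nonneg (h : IsCoupledRecurrence T r p α β) (hβ : ∀ k < ℓ, 0 ≤ β k)
    (f : M →ₗ[R] R) (hf : ∀ k ≤ ℓ, 0 ≤ f (r k)) : ∀ k ≤ ℓ, 0 ≤ f (p k) := by
  intro k hk
  induction k with
  | zero => simpa only [h.p_zero] using hf 0 hk
  | succ k ih =>
    rw [h.p_succ, map_add, map_smul, smul_eq_mul]
    exact add_nonneg (hf _ hk) (mul_nonneg (hβ k hk) (ih (Nat.le_of_succ_le hk)))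

theorem apply_r_nonneg (h : IsCoupledRecurrence T r p α β) (hα : ∀ k < ℓ, 0 ≤ α k)
    (hfin : r ℓ = 0) (f : M →ₗ[R] R) (hf : ∀ k < ℓ, 0 ≤ f (T (p k))) : ∀ k ≤ ℓ, 0 ≤ f (r k) := by
  intro k hk
  induction hk using Nat.decreasingInduction with
  | self => rw [hfin, map_zero]
  | of_succ k hk ih =>
    rw [← sub_add_cancel (r k) (α k • T (p k)), ← h.r_succ, map_add, map_smul, smul_eq_mul]
    exact add_nonneg ih (mul_nonneg (hα k hk) (hf k hk))

theorem apply_pow_r_nonneg_of_le (h : IsCoupledRecurrence T r p α β) (hα : ∀ k < ℓ, 0 ≤ α k)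
    (hβ : ∀ k < ℓ, 0 ≤ β k) (hfin : r ℓ = 0) (f : M →ₗ[R] R) {s t : ℕ} (hts : t ≤ s)
    (hf : ∀ k ≤ ℓ, 0 ≤ f ((T ^ s) (r k))) : ∀ k ≤ ℓ, 0 ≤ f ((T ^ t) (r k)) := by
  induction hts using Nat.decreasingInduction with
  | self => exact hf
  | of_succ t _ ih =>
    have hp : ∀ k ≤ ℓ, 0 ≤ f ((T ^ (t + 1)) (p k)) := h.apply_p_nonneg hβ (f ∘ₗ T ^ (t + 1)) ih
    exact h.apply_r_nonneg hα hfin (f ∘ₗ T ^ t) fun k hk => hp k hk.le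

theorem bilin_p_nonneg (h : IsCoupledRecurrence T r p α β) (hβ : ∀ k < ℓ, 0 ≤ β k)
    (B : LinearMap.BilinForm R M) (hB : ∀ i ≤ ℓ, ∀ j ≤ ℓ, 0 ≤ B (r i) (r j)) :
    ∀ i ≤ ℓ, ∀ j ≤ ℓ, 0 ≤ B (p i) (p j) := by
  intro i hi j hj
  have hrp : ∀ k ≤ ℓ, 0 ≤ B (r k) (p j) := fun k hk =>
    h.apply_p_nonneg hβ (B (r k)) (hB k hk) j hj
  exact h.apply_p_nonneg hβ (B.flip (p j)) hrp i hi

end IsCoupledRecurrence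

/-- The conjugate gradient method for the operator `T` in the inner product `B`. For the dot product
and a symmetric matrix `A`, the form `B u v = uᵀAˢv` gives the classical method for `s = 0`,
conjugate residuals for `s = 1`, and the cAr iteration for `s = 3`. A coefficient with vanishing
denominator is `0`. -/
structure IsConjugateGradient {K V : Type*} [Field K] [AddCommGroup V] [Module K V]
    (B : LinearMap.BilinForm K V) (T : Module.End K V) (r p : ℕ → V) (α β : ℕ → K) : Prop
    extends IsCoupledRecurrence T r p α β where
  α_eq : ∀ k, α k = B (r k) (r k) / B (p k) (T (p k))
  β_eq : ∀ k, β k = B (r (k + 1)) (r (k + 1)) / B (r k) (r k)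

namespace IsConjugateGradient

variable {K V : Type*} [Field K] [AddCommGroup V] [Module K V] {B : LinearMap.BilinForm K V}
  {T : Module.End K V} {r p : ℕ → V} {α β : ℕ → K} {ℓ : ℕ}

theorem bilin_p_r_self (h : IsConjugateGradient B T r p α β) (hBT : ∀ u ≠ 0, B u (T u) ≠ 0)
    (k : ℕ) : B (p k) (r k) = B (r k) (r k) := by
  induction k with
  | zero => rw [h.p_zero]
  | succ k ih =>
    have step : α k * B (p k) (T (p k)) = B (r k) (r k) := by
      rw [h.α_eq]
      -- If the denominator vanishes, so does the numerator: then `p k = 0`, and `ih` applies.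
      refine div_mul_cancel_of_imp fun hzero => ?_
      have hpk : p k = 0 := not_not.1 fun hne => hBT _ hne hzero
      rw [← ih, hpk, LinearMap.map_zero₂]
    have orth : B (p k) (r (k + 1)) = 0 := by
      rw [h.r_succ, map_sub, map_smul, smul_eq_mul, step, ih, sub_self]
    nth_rewrite 1 [h.p_succ]
    rw [LinearMap.map_add₂, LinearMap.map_smul₂, orth, smul_zero, add_zero]

theorem p_ne_zero (h : IsConjugateGradient B T r p α β) (hBT : ∀ u ≠ 0, B u (T u) ≠ 0) {k : ℕ}
    (hk : B (r k) (r k) ≠ 0) : p k ≠ 0 := by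
  intro hpk
  rw [← h.bilin_p_r_self hBT, hpk, LinearMap.map_zero₂] at hk
  exact hk rfl

theorem bilin_r_r_succ_eq_zero (h : IsConjugateGradient B T r p α β) {k : ℕ}
    (hpk : B (p k) (T (p k)) ≠ 0) (hr : ∀ i < k, B (r i) (r k) = 0)
    (hconj : ∀ i < k, B (p i) (T (p k)) = 0) {i : ℕ} (hi : i ≤ k) :
    B (r i) (r (k + 1)) = 0 := by
  rw [h.r_succ, map_sub, map_smul, smul_eq_mul, h.bilin_r_map_p_eq hconj hi]
  rcases hi.lt_or_eq with hlt | rfl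
  · rw [hr i hlt, hconj i hlt, mul_zero, sub_zero]
  · rw [h.α_eq, div_mul_cancel₀ _ hpk, sub_self]

theorem bilin_p_map_p_succ_eq_zero (h : IsConjugateGradient B T r p α β)
    (hT : B.IsSelfAdjoint T) {k : ℕ} (hr_ne : ∀ i ≤ k, B (r i) (r i) ≠ 0)
    (hp_ne : ∀ i ≤ k, B (p i) (T (p i)) ≠ 0) (hr : ∀ i ≤ k, B (r i) (r (k + 1)) = 0)
    (hconj : ∀ i < k, B (p i) (T (p k)) = 0) {i : ℕ} (hi : i ≤ k) :
    B (p i) (T (p (k + 1))) = 0 := by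
  have hα : α i ≠ 0 := by
    rw [h.α_eq]
    exact div_ne_zero (hr_ne i hi) (hp_ne i hi)
  refine (mul_eq_zero.1 ?_).resolve_left hα
  have expand : α i * B (p i) (T (p (k + 1))) =
      -B (r (i + 1)) (r (k + 1)) + β k * (α i * B (p i) (T (p k))) := by
    rw [h.p_succ, map_add, map_add, map_smul, map_smul, smul_eq_mul, mul_add,
      h.mul_bilin_p_map hT, hr i hi]
    ring
  rw [expand]
  rcases hi.lt_or_eq with hlt | rfl
  · rw [hr (i + 1) hlt, hconj i hlt, mul_zero, mul_zero, neg_zero, add_zero]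
  · rw [h.α_eq, h.β_eq, div_mul_cancel₀ _ (hp_ne i le_rfl), div_mul_cancel₀ _ (hr_ne i le_rfl),
      neg_add_cancel]

theorem orthogonal_and_conjugate (h : IsConjugateGradient B T r p α β)
    (hT : B.IsSelfAdjoint T) (hr_ne : ∀ k < ℓ, B (r k) (r k) ≠ 0)
    (hp_ne : ∀ k < ℓ, B (p k) (T (p k)) ≠ 0) :
    ∀ k ≤ ℓ, ∀ i < k, B (r i) (r k) = 0 ∧ B (p i) (T (p k)) = 0 := by
  intro k hk
  induction k with
  | zero => exact fun i hi => absurd hi i.not_lt_zero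
  | succ k ih =>
    have ih := ih (Nat.le_of_succ_le hk)
    have hr : ∀ i ≤ k, B (r i) (r (k + 1)) = 0 := fun i =>
      h.bilin_r_r_succ_eq_zero (hp_ne k hk) (fun j hj => (ih j hj).1) (fun j hj => (ih j hj).2)
    have hconj : ∀ i ≤ k, B (p i) (T (p (k + 1))) = 0 := fun i =>
      h.bilin_p_map_p_succ_eq_zero hT (fun j hj => hr_ne j (by lia))
        (fun j hj => hp_ne j (by lia)) hr (fun j hj => (ih j hj).2)
    exact fun i hi => ⟨hr i (Nat.le_of_lt_succ hi), hconj i (Nat.le_of_lt_succ hi)⟩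

theorem bilin_r_r_eq_zero (h : IsConjugateGradient B T r p α β) (hB : B.IsSymm)
    (hT : B.IsSelfAdjoint T) (hBT : ∀ u ≠ 0, B u (T u) ≠ 0)
    (hr_ne : ∀ k < ℓ, B (r k) (r k) ≠ 0) {i j : ℕ} (hi : i ≤ ℓ) (hj : j ≤ ℓ) (hij : i ≠ j) :
    B (r i) (r j) = 0 := by
  have hp_ne : ∀ k < ℓ, B (p k) (T (p k)) ≠ 0 := fun k hk =>
    hBT _ (h.p_ne_zero hBT (hr_ne k hk))
  have orth := h.orthogonal_and_conjugate hT hr_ne hp_ne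
  rcases hij.lt_or_gt with hlt | hgt
  · exact (orth j hj i hlt).1
  · rw [hB.eq]
    exact (orth i hi j hgt).1

theorem bilin_r_r_nonneg [PartialOrder K] (h : IsConjugateGradient B T r p α β) (hB : B.IsSymm)
    (hT : B.IsSelfAdjoint T) (hB_pos : ∀ u ≠ 0, 0 < B u u) (hBT_pos : ∀ u ≠ 0, 0 < B u (T u))
    (hne : ∀ k < ℓ, r k ≠ 0) {i j : ℕ} (hi : i ≤ ℓ) (hj : j ≤ ℓ) : 0 ≤ B (r i) (r j) := by
  obtain rfl | hij := eq_or_ne i j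
  · exact bilinForm_self_nonneg_of_pos hB_pos (r i)
  · exact (h.bilin_r_r_eq_zero hB hT (fun u hu => (hBT_pos u hu).ne')
      (fun k hk => (hB_pos _ (hne k hk)).ne') hi hj hij).ge

variable [LinearOrder K] [IsStrictOrderedRing K]

theorem α_nonneg (h : IsConjugateGradient B T r p α β) (hB : ∀ u, 0 ≤ B u u)
    (hBT : ∀ u, 0 ≤ B u (T u)) (k : ℕ) : 0 ≤ α k := by
  rw [h.α_eq]
  exact div_nonneg (hB _) (hBT _)

theorem β_nonneg (h : IsConjugateGradient B T r p α β) (hB : ∀ u, 0 ≤ B u u) (k : ℕ) :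
    0 ≤ β k := by
  rw [h.β_eq]
  exact div_nonneg (hB _) (hB _)

end IsConjugateGradient

section DotProduct

/-- The dot product as a bilinear form. It fixes the type of `dotProductBilin R R`, so that the
API of bilinear forms applies to it. -/
abbrev dotForm (R ι : Type*) [CommRing R] [Fintype ι] : LinearMap.BilinForm R (ι → R) :=
  dotProductBilin R R

variable {R ι : Type*} [CommRing R] [Fintype ι]

theorem isSymm_dotForm : (dotForm R ι).IsSymm where
  eq := dotProduct_comm

theorem mulVec_dotProduct_of_isSymm {A : Matrix ι ι R} (hA : A.IsSymm) (u v : ι → R) :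
    A *ᵥ u ⬝ᵥ v = u ⬝ᵥ A *ᵥ v := by
  rw [dotProduct_mulVec, ← mulVec_transpose, hA.eq]

variable [DecidableEq ι]

theorem isSelfAdjoint_dotForm_toLin' {A : Matrix ι ι R} (hA : A.IsSymm) :
    (dotForm R ι).IsSelfAdjoint A.toLin' :=
  mulVec_dotProduct_of_isSymm hA

open scoped ComplexOrder in
theorem posDef_pow {𝕜 : Type*} [RCLike 𝕜] {A : Matrix ι ι 𝕜} (hA : A.PosDef) (s : ℕ) :
    (A ^ s).PosDef :=
  (hA.posSemidef.pow s).posDef_iff_isUnit.2 (hA.isUnit.pow s)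

theorem dotForm_toLin'_pow_pos {A : Matrix ι ι ℝ} (hA : A.PosDef) (s : ℕ) (u : ι → ℝ)
    (hu : u ≠ 0) : 0 < dotForm ℝ ι u ((A.toLin' ^ s) u) := by
  rw [← toLin'_pow]
  exact (posDef_pow hA s).dotProduct_mulVec_pos hu

theorem isConjugateGradient_car {K : Type*} [Field K] {A : Matrix ι ι K} (hA : A.IsSymm)
    {r p : ℕ → ι → K} {ρ α β : ℕ → K} (hp0 : p 0 = r 0)
    (hρ : ∀ k, ρ k = r k ⬝ᵥ (A ^ 3) *ᵥ r k)
    (hα : ∀ k, α k = ρ k / ((A ^ 2) *ᵥ p k ⬝ᵥ (A ^ 2) *ᵥ p k))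
    (hr : ∀ k, r (k + 1) = r k - α k • A *ᵥ p k)
    (hβ : ∀ k, β k = ρ (k + 1) / ρ k)
    (hp : ∀ k, p (k + 1) = r (k + 1) + β k • p k) :
    IsConjugateGradient ((dotForm K ι).compRight (A.toLin' ^ 3)) A.toLin' r p α β := by
  have norm_sq (k : ℕ) :
      (A ^ 2) *ᵥ p k ⬝ᵥ (A ^ 2) *ᵥ p k = p k ⬝ᵥ (A ^ 3) *ᵥ (A *ᵥ p k) := by
    rw [mulVec_dotProduct_of_isSymm (hA.pow 2), mulVec_mulVec, mulVec_mulVec, ← pow_add,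
      ← pow_succ]
  rw [← toLin'_pow]
  exact
    { p_zero := hp0
      r_succ := hr
      p_succ := hp
      α_eq := fun k => by rw [hα, hρ, norm_sq]; rfl
      β_eq := fun k => by rw [hβ, hρ, hρ]; rfl }

end DotProduct

theorem car_pA2p_nonneg_general {K V : Type*} [Field K] [LinearOrder K] [IsStrictOrderedRing K]
    [AddCommGroup V] [Module K V] {C : LinearMap.BilinForm K V} {T : Module.End K V}
    (hC : C.IsSymm) (hT : C.IsSelfAdjoint T) {s : ℕ}
    (hs : ∀ u ≠ 0, 0 < C u ((T ^ s) u)) (hs_succ : ∀ u ≠ 0, 0 < C u ((T ^ (s + 1)) u))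
    {r p : ℕ → V} {α β : ℕ → K} (h : IsConjugateGradient (C.compRight (T ^ s)) T r p α β)
    {ℓ : ℕ} (hne : ∀ k < ℓ, r k ≠ 0) (hfin : r ℓ = 0) {t : ℕ} (hts : t ≤ s) :
    ∀ i ≤ ℓ, ∀ j ≤ ℓ, 0 ≤ C (p i) ((T ^ t) (p j)) := by
  have hs_nonneg := bilinForm_self_nonneg_of_pos (B := C.compRight (T ^ s)) hs
  have hs_succ_nonneg := bilinForm_self_nonneg_of_pos (B := C.compRight (T ^ (s + 1))) hs_succ
  have hα := h.α_nonneg hs_nonneg hs_succ_nonneg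
  have hβ := h.β_nonneg hs_nonneg
  have hrr : ∀ i ≤ ℓ, ∀ j ≤ ℓ, 0 ≤ C (r i) ((T ^ s) (r j)) := fun i hi j hj =>
    h.bilin_r_r_nonneg (isSymm_compRight_pow hC hT s) (isSelfAdjoint_compRight_pow hT s) hs hs_succ
      hne hi hj
  exact h.bilin_p_nonneg (fun k _ => hβ k) (C.compRight (T ^ t)) fun i hi =>
    h.apply_pow_r_nonneg_of_le (fun k _ => hα k) (fun k _ => hβ k) hfin (C (r i)) hts (hrr i hi)

/-- Paper: Theorem 6.3(g).  cAr iteration for SPD `A` (with `ρ_k = r_kᵀA³r_k`,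
`α_k = ρ_k/‖A²p_k‖²`, `β_k = ρ_{k+1}/ρ_k`), terminating at step `ℓ ≤ n`
(`r_k ≠ 0` for `k < ℓ` and `r_ℓ = 0`):  the directions satisfy `p_iᵀ A² p_j ≥ 0`. -/
theorem car_pA2p_nonneg (n ℓ : ℕ) (hℓn : ℓ ≤ n)
    (A : Matrix (Fin n) (Fin n) ℝ) (hA : A.PosDef) (b : Fin n → ℝ)
    (x r p : ℕ → (Fin n → ℝ)) (ρ α β : ℕ → ℝ)
    (hx0 : x 0 = 0) (hr0 : r 0 = b) (hp0 : p 0 = b)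
    (hρ : ∀ k, ρ k = r k ⬝ᵥ (A ^ 3).mulVec (r k))
    (hα : ∀ k, α k = ρ k / ((A ^ 2).mulVec (p k) ⬝ᵥ (A ^ 2).mulVec (p k)))
    (hx : ∀ k, x (k + 1) = x k + α k • p k)
    (hr : ∀ k, r (k + 1) = r k - α k • A.mulVec (p k))
    (hβ : ∀ k, β k = ρ (k + 1) / ρ k)
    (hp : ∀ k, p (k + 1) = r (k + 1) + β k • p k)
    (hne : ∀ k < ℓ, r k ≠ 0) (hfin : r ℓ = 0) :
    ∀ i ≤ ℓ, ∀ j ≤ ℓ, 0 ≤ p i ⬝ᵥ (A ^ 2).mulVec (p j) := by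
  have hA_symm : A.IsSymm := isHermitian_iff_isSymm.1 hA.isHermitian
  have h := isConjugateGradient_car hA_symm (hp0.trans hr0.symm) hρ hα hr hβ hp
  have hnonneg := car_pA2p_nonneg_general isSymm_dotForm (isSelfAdjoint_dotForm_toLin' hA_symm)
    (dotForm_toLin'_pow_pos hA 3) (dotForm_toLin'_pow_pos hA 4) h hne hfin (Nat.le_succ 2)
  rwa [← toLin'_pow] at hnonneg
end

section
/- Let x* = A⁻¹b be the exact solution of Ax = b. Then for all 1 ≤ k ≤ ℓ, the cAr (equivalently MinAres) iterates satisfy ‖x_{k−1}‖ ≤ ‖x_k‖ (the norms of the iterates increase monotonically) and ‖x* − x_k‖ ≤ ‖x* − x_{k−1}‖ (the error norms decrease monotonically). -/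
open Matrix

/-!
The cAr iteration is the conjugate gradient method for the form `⟪u, A³ v⟫`; replacing `A³` by
`Aᵐ` covers CG (`m = 0`) and CR (`m = 1`) as well. Conjugacy makes the residuals orthogonal for
this form, so `⟪r s, Aᵐ (r t)⟫ ≥ 0`. A functional that is nonnegative on the residuals is
nonnegative on the directions, since `p (k + 1) = r (k + 1) + β k • p k` with `β k ≥ 0`; one whose
composite with `A` is nonnegative on the directions is nonnegative on the residuals, since `r ℓ = 0`
gives `r k = ∑ i ∈ [k, ℓ), α i • A (p i)` with `α i ≥ 0`. Alternating the two strips off the `m`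
powers of `A`, so that `⟪p s, p t⟫ ≥ 0`: no two steps of the iteration make an obtuse angle, and
therefore both norms are monotone.
-/

/-- The conjugate gradient method for `T x = b` with respect to a bilinear form `B`: iterates `x`,
residuals `r`, search directions `p`, step lengths `α` and direction updates `β`. Since
division by zero gives zero, the sequences are total and `x` stays constant once `r k = 0`. -/
structure IsCGIteration {K V : Type*} [Field K] [AddCommGroup V] [Module K V]
    (B : LinearMap.BilinForm K V) (T : Module.End K V) (b : V)
    (x r p : ℕ → V) (ρ α β : ℕ → K) : Prop where
  x_zero : x 0 = 0
  r_zero : r 0 = b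
  p_zero : p 0 = b
  rho_eq : ∀ k, ρ k = B (r k) (r k)
  alpha_eq : ∀ k, α k = ρ k / B (p k) (T (p k))
  x_succ : ∀ k, x (k + 1) = x k + α k • p k
  r_succ : ∀ k, r (k + 1) = r k - α k • T (p k)
  beta_eq : ∀ k, β k = ρ (k + 1) / ρ k
  p_succ : ∀ k, p (k + 1) = r (k + 1) + β k • p k

namespace IsCGIteration

section Field

variable {K V : Type*} [Field K] [AddCommGroup V] [Module K V] {B : LinearMap.BilinForm K V}
  {T : Module.End K V} {b : V} {x r p : ℕ → V} {ρ α β : ℕ → K}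

theorem residual_eq (h : IsCGIteration B T b x r p ρ α β) (k : ℕ) : r k = b - T (x k) := by
  induction k with
  | zero => rw [h.r_zero, h.x_zero, map_zero, sub_zero]
  | succ k ih => rw [h.r_succ, h.x_succ, map_add, map_smul, ih, sub_sub]

theorem direction_mem_range (h : IsCGIteration B T b x r p ρ α β) (hb : b ∈ T.range) (k : ℕ) :
    p k ∈ T.range := by
  induction k with
  | zero => rwa [h.p_zero]
  | succ k ih =>
    rw [h.p_succ, h.residual_eq]
    exact add_mem (sub_mem hb (T.mem_range_self _)) (Submodule.smul_mem _ _ ih)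

theorem residual_orthogonal_of_direction_orthogonal (h : IsCGIteration B T b x r p ρ α β)
    {v : V} {k : ℕ} (hv : ∀ i < k, B (p i) v = 0) : ∀ i < k, B (r i) v = 0 := by
  rintro (_ | i) hi
  · rw [h.r_zero, ← h.p_zero, hv 0 hi]
  · rw [← add_sub_cancel_right (r (i + 1)) (β i • p i), ← h.p_succ]
    simp [hv (i + 1) hi, hv i (by lia)]

theorem apply_direction_residual (h : IsCGIteration B T b x r p ρ α β) {k : ℕ}
    (horth : ∀ i < k, B (p i) (r k) = 0) : B (p k) (r k) = ρ k := by
  cases k with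
  | zero => rw [h.rho_eq, h.p_zero, h.r_zero]
  | succ k => simp [h.p_succ, horth k, h.rho_eq]

theorem alpha_mul_apply_direction (h : IsCGIteration B T b x r p ρ α β) {k : ℕ} (hα : α k ≠ 0) :
    α k * B (p k) (T (p k)) = ρ k := by
  rw [h.alpha_eq] at hα ⊢
  exact div_mul_cancel₀ _ (div_ne_zero_iff.1 hα).2

theorem rho_ne_zero_of_alpha_ne_zero (h : IsCGIteration B T b x r p ρ α β) {k : ℕ}
    (hα : α k ≠ 0) : ρ k ≠ 0 := by
  rw [h.alpha_eq] at hα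
  exact (div_ne_zero_iff.1 hα).1

theorem direction_orthogonal_residual_succ (h : IsCGIteration B T b x r p ρ α β) {k : ℕ}
    (hα : α k ≠ 0) (horth : ∀ i < k, B (p i) (r k) = 0)
    (hconj : ∀ i < k, B (p i) (T (p k)) = 0) : ∀ i < k + 1, B (p i) (r (k + 1)) = 0 := by
  intro i hi
  rw [h.r_succ, map_sub, map_smul, smul_eq_mul]
  obtain hi | rfl := Nat.lt_succ_iff_lt_or_eq.1 hi
  · rw [horth i hi, hconj i hi, mul_zero, sub_zero]
  · rw [h.apply_direction_residual horth, h.alpha_mul_apply_direction hα, sub_self]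

theorem direction_conjugate_direction_succ (h : IsCGIteration B T b x r p ρ α β)
    (hT : B.IsSelfAdjoint T) {k : ℕ} (hα : ∀ i < k + 1, α i ≠ 0)
    (horth : ∀ i < k + 1, B (p i) (r (k + 1)) = 0) (hconj : ∀ i < k, B (p i) (T (p k)) = 0) :
    ∀ i < k + 1, B (p i) (T (p (k + 1))) = 0 := by
  intro i hi
  have hres := h.residual_orthogonal_of_direction_orthogonal horth
  have happly_residual : α i * B (p i) (T (r (k + 1))) = -B (r (i + 1)) (r (k + 1)) := by
    rw [← hT, h.r_succ i]
    simp [hres i hi]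
  have hdirection : α i * B (p i) (T (p (k + 1))) =
      -B (r (i + 1)) (r (k + 1)) + β k * (α i * B (p i) (T (p k))) := by
    rw [← happly_residual, h.p_succ]
    simp only [map_add, map_smul, smul_eq_mul]
    ring
  refine (mul_eq_zero.1 (hdirection.trans ?_)).resolve_left (hα i hi)
  obtain hi | rfl := Nat.lt_succ_iff_lt_or_eq.1 hi
  · rw [hres (i + 1) (by lia), hconj i hi]
    simp
  · rw [h.alpha_mul_apply_direction (hα i hi), ← h.rho_eq, h.beta_eq,
      div_mul_cancel₀ _ (h.rho_ne_zero_of_alpha_ne_zero (hα i hi)), neg_add_cancel]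

theorem direction_orthogonal_and_conjugate (h : IsCGIteration B T b x r p ρ α β)
    (hT : B.IsSelfAdjoint T) {k : ℕ} (hα : ∀ i < k, α i ≠ 0) :
    (∀ i < k, B (p i) (r k) = 0) ∧ ∀ i < k, B (p i) (T (p k)) = 0 := by
  induction k with
  | zero => simp
  | succ k ih =>
    obtain ⟨horth, hconj⟩ := ih fun i hi => hα i (by lia)
    have horth_succ := h.direction_orthogonal_residual_succ (hα k k.lt_succ_self) horth hconj
    exact ⟨horth_succ, h.direction_conjugate_direction_succ hT hα horth_succ hconj⟩

theorem alpha_ne_zero (h : IsCGIteration B T b x r p ρ α β) (hT : B.IsSelfAdjoint T) {ℓ : ℕ}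
    (hρ : ∀ k < ℓ, ρ k ≠ 0)
    (hdirection : ∀ k < ℓ, B (p k) (r k) ≠ 0 → B (p k) (T (p k)) ≠ 0) :
    ∀ k < ℓ, α k ≠ 0 := by
  intro k hk
  induction k using Nat.strong_induction_on with
  | _ k ih =>
    have horth := (h.direction_orthogonal_and_conjugate hT fun i hi => ih i hi (hi.trans hk)).1
    rw [h.alpha_eq]
    refine div_ne_zero (hρ k hk) (hdirection k hk ?_)
    rw [h.apply_direction_residual horth]
    exact hρ k hk

theorem residual_orthogonal (h : IsCGIteration B T b x r p ρ α β) (hT : B.IsSelfAdjoint T)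
    {k : ℕ} (hα : ∀ i < k, α i ≠ 0) : ∀ i < k, B (r i) (r k) = 0 :=
  h.residual_orthogonal_of_direction_orthogonal (h.direction_orthogonal_and_conjugate hT hα).1

end Field

section OrderedField

variable {K V : Type*} [Field K] [LinearOrder K] [AddCommGroup V] [Module K V]
  {B : LinearMap.BilinForm K V} {T : Module.End K V} {b : V} {x r p : ℕ → V} {ρ α β : ℕ → K} {ℓ : ℕ}

theorem rho_nonneg (h : IsCGIteration B T b x r p ρ α β) (hB : B.IsNonneg) (k : ℕ) : 0 ≤ ρ k :=
  h.rho_eq k ▸ hB.nonneg (r k)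

theorem apply_residual_nonneg (h : IsCGIteration B T b x r p ρ α β) (hB : B.IsPosSemidef)
    (hT : B.IsSelfAdjoint T) (hα : ∀ k < ℓ, α k ≠ 0) {s t : ℕ} (hs : s ≤ ℓ) (ht : t ≤ ℓ) :
    0 ≤ B (r s) (r t) := by
  obtain hst | rfl | hts := lt_trichotomy s t
  · exact (h.residual_orthogonal hT (fun i hi => hα i (hi.trans_le ht)) s hst).ge
  · exact hB.nonneg (r s)
  · rw [hB.isSymm.eq]
    exact (h.residual_orthogonal hT (fun i hi => hα i (hi.trans_le hs)) t hts).ge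

variable [IsStrictOrderedRing K]

theorem alpha_nonneg (h : IsCGIteration B T b x r p ρ α β) (hB : B.IsNonneg)
    (hBT : ∀ v, 0 ≤ B v (T v)) (k : ℕ) : 0 ≤ α k :=
  h.alpha_eq k ▸ div_nonneg (h.rho_nonneg hB k) (hBT _)

theorem beta_nonneg (h : IsCGIteration B T b x r p ρ α β) (hB : B.IsNonneg) (k : ℕ) : 0 ≤ β k :=
  h.beta_eq k ▸ div_nonneg (h.rho_nonneg hB _) (h.rho_nonneg hB k)

theorem map_direction_nonneg (h : IsCGIteration B T b x r p ρ α β) (hβ : ∀ k, 0 ≤ β k)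
    (F : Module.Dual K V) (hF : ∀ k ≤ ℓ, 0 ≤ F (r k)) : ∀ k ≤ ℓ, 0 ≤ F (p k) := by
  intro k hk
  induction k with
  | zero => simpa only [h.p_zero, ← h.r_zero] using hF 0 hk
  | succ k ih =>
    rw [h.p_succ, map_add, map_smul]
    exact add_nonneg (hF _ hk) (smul_nonneg (hβ k) (ih (by lia)))

theorem map_iterate_monotoneOn (h : IsCGIteration B T b x r p ρ α β) (hα : ∀ k, 0 ≤ α k)
    (F : Module.Dual K V) (hF : ∀ k ≤ ℓ, 0 ≤ F (p k)) :
    MonotoneOn (fun k => F (x k)) (Set.Iic ℓ) := by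
  refine monotoneOn_of_le_succ Set.ordConnected_Iic fun k _ hk _ => ?_
  rw [Order.succ_eq_add_one, h.x_succ, map_add, map_smul]
  exact le_add_of_nonneg_right (smul_nonneg (hα k) (hF k hk))

theorem map_residual_nonneg (h : IsCGIteration B T b x r p ρ α β) (hα : ∀ k, 0 ≤ α k)
    (hfin : r ℓ = 0) (F : Module.Dual K V) (hF : ∀ k ≤ ℓ, 0 ≤ F (T (p k))) :
    ∀ k ≤ ℓ, 0 ≤ F (r k) := by
  intro k hk
  have hmono : F (T (x k)) ≤ F (T (x ℓ)) :=
    h.map_iterate_monotoneOn hα (F ∘ₗ T) hF hk Set.self_mem_Iic hk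
  have hb : b = T (x ℓ) := sub_eq_zero.1 (h.residual_eq ℓ ▸ hfin)
  rwa [h.residual_eq, hb, map_sub, sub_nonneg]

theorem map_residual_nonneg_of_map_pow (h : IsCGIteration B T b x r p ρ α β)
    (hα : ∀ k, 0 ≤ α k) (hβ : ∀ k, 0 ≤ β k) (hfin : r ℓ = 0) (m : ℕ) (F : Module.Dual K V)
    (hF : ∀ k ≤ ℓ, 0 ≤ F ((T ^ m) (r k))) : ∀ k ≤ ℓ, 0 ≤ F (r k) := by
  induction m generalizing F with
  | zero => exact hF
  | succ m ih =>
    simp only [pow_succ', Module.End.mul_apply] at hF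
    exact h.map_residual_nonneg hα hfin F (h.map_direction_nonneg hβ (F ∘ₗ T) (ih (F ∘ₗ T) hF))

end OrderedField

end IsCGIteration

section InnerProductSpace

variable {E : Type*} [NormedAddCommGroup E] [InnerProductSpace ℝ E]

theorem norm_le_norm_of_inner_self_le_inner {u v : E} (h : inner ℝ u u ≤ inner ℝ u v) :
    ‖u‖ ≤ ‖v‖ := by
  obtain hu | hu := (norm_nonneg u).eq_or_lt
  · exact hu ▸ norm_nonneg v
  · refine le_of_mul_le_mul_left ?_ hu
    calc ‖u‖ * ‖u‖ = inner ℝ u u := (real_inner_self_eq_norm_mul_norm u).symm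
      _ ≤ inner ℝ u v := h
      _ ≤ ‖u‖ * ‖v‖ := real_inner_le_norm u v

/-- The bilinear form `(u, v) ↦ ⟪u, Tᵐ v⟫`. The conjugate gradient method with respect to it is the
classical CG method for `m = 0`, the conjugate residual method for `m = 1`, and cAr for `m = 3`. -/
noncomputable def innerPow (T : Module.End ℝ E) (m : ℕ) : LinearMap.BilinForm ℝ E :=
  (innerₗ E).compl₂ (T ^ m)

variable {T : Module.End ℝ E}

theorem innerPow_apply (T : Module.End ℝ E) (m : ℕ) (u v : E) :
    innerPow T m u v = inner ℝ u ((T ^ m) v) :=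
  rfl

theorem innerPow_apply_map (T : Module.End ℝ E) (m : ℕ) (u v : E) :
    innerPow T m u (T v) = innerPow T (m + 1) u v := by
  rw [innerPow_apply, innerPow_apply, pow_succ, Module.End.mul_apply]

theorem innerPow_isSelfAdjoint (hT : T.IsSymmetric) (m : ℕ) : (innerPow T m).IsSelfAdjoint T := by
  intro u v
  rw [innerPow_apply_map, innerPow_apply, innerPow_apply, hT, pow_succ', Module.End.mul_apply]

theorem innerPow_map_map (hT : T.IsSymmetric) (m : ℕ) (u v : E) :
    innerPow T m (T u) (T v) = innerPow T (m + 2) u v := by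
  rw [innerPow_isSelfAdjoint hT, innerPow_apply_map, innerPow_apply_map]

theorem innerPow_self_nonneg (hT : T.IsPositive) (m : ℕ) (u : E) : 0 ≤ innerPow T m u u := by
  induction m using Nat.twoStepInduction generalizing u with
  | zero => exact real_inner_self_nonneg
  | one => exact hT.re_inner_nonneg_right u
  | more m ih _ => exact innerPow_map_map hT.isSymmetric m u u ▸ ih (T u)

theorem innerPow_isPosSemidef (hT : T.IsPositive) (m : ℕ) : (innerPow T m).IsPosSemidef where
  eq u v := by rw [innerPow_apply, innerPow_apply, ← hT.isSymmetric.pow m, real_inner_comm]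
  nonneg := innerPow_self_nonneg hT m

theorem innerPow_eq_zero_of_self_eq_zero (hT : T.IsPositive) {m : ℕ} {u : E}
    (hu : innerPow T m u u = 0) : innerPow T m u = 0 :=
  ((innerPow T m).apply_apply_same_eq_zero_iff (innerPow_self_nonneg hT m)
    (LinearMap.BilinForm.isSymm_iff.1 (innerPow_isPosSemidef hT m).isSymm)).1 hu

theorem map_eq_zero_of_innerPow_self_eq_zero (hT : T.IsPositive) {m : ℕ} {u : E}
    (hu : innerPow T m u u = 0) : T u = 0 := by
  have map_eq_zero_of_inner_map_map {v : E} (hv : inner ℝ v (T (T v)) = 0) : T v = 0 :=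
    inner_self_eq_zero.1 ((hT.isSymmetric v (T v)).trans hv)
  induction m using Nat.twoStepInduction generalizing u with
  | zero => rw [inner_self_eq_zero.1 hu, map_zero]
  | one =>
    exact map_eq_zero_of_inner_map_map
      (LinearMap.congr_fun (innerPow_eq_zero_of_self_eq_zero hT hu) (T u))
  | more m ih _ =>
    rw [← innerPow_map_map hT.isSymmetric] at hu
    exact map_eq_zero_of_inner_map_map (by rw [ih hu, inner_zero_right])

end InnerProductSpace

namespace IsCGIteration

variable {E : Type*} [NormedAddCommGroup E] [InnerProductSpace ℝ E] {T : Module.End ℝ E}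
  {m ℓ : ℕ} {b : E} {x r p : ℕ → E} {ρ α β : ℕ → ℝ}

theorem alpha_nonneg_of_isPositive (h : IsCGIteration (innerPow T m) T b x r p ρ α β)
    (hT : T.IsPositive) : ∀ k, 0 ≤ α k := by
  refine h.alpha_nonneg (innerPow_isPosSemidef hT m).isNonneg fun v => ?_
  rw [innerPow_apply_map]
  exact innerPow_self_nonneg hT (m + 1) v

theorem alpha_ne_zero_of_isPositive (h : IsCGIteration (innerPow T m) T b x r p ρ α β)
    (hT : T.IsPositive) (hb : b ∈ T.range) (hne : ∀ k < ℓ, r k ≠ 0) : ∀ k < ℓ, α k ≠ 0 := by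
  have residual_mem_range (k : ℕ) : ∃ y, T y = r k :=
    h.residual_eq k ▸ sub_mem hb (T.mem_range_self _)
  refine h.alpha_ne_zero (innerPow_isSelfAdjoint hT.isSymmetric m) (fun k hk hρ => ?_)
    fun k _ hpr hpp => ?_
  all_goals obtain ⟨y, hy⟩ := residual_mem_range k
  · rw [h.rho_eq, ← hy, innerPow_map_map hT.isSymmetric] at hρ
    exact hne k hk (hy ▸ map_eq_zero_of_innerPow_self_eq_zero hT hρ)
  · rw [innerPow_apply_map] at hpp
    rw [← hy, innerPow_apply_map, innerPow_eq_zero_of_self_eq_zero hT hpp] at hpr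
    exact hpr rfl

theorem inner_direction_nonneg (h : IsCGIteration (innerPow T m) T b x r p ρ α β)
    (hT : T.IsPositive) (hne : ∀ k < ℓ, r k ≠ 0) (hfin : r ℓ = 0) {s t : ℕ} (hs : s ≤ ℓ)
    (ht : t ≤ ℓ) : 0 ≤ inner ℝ (p s) (p t) := by
  have hb : b ∈ T.range := ⟨x ℓ, (sub_eq_zero.1 (h.residual_eq ℓ ▸ hfin)).symm⟩
  have hα := h.alpha_nonneg_of_isPositive hT
  have hβ := h.beta_nonneg (innerPow_isPosSemidef hT m).isNonneg
  have residual_pow_residual (i : ℕ) (hi : i ≤ ℓ) (j : ℕ) (hj : j ≤ ℓ) :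
      0 ≤ inner ℝ (r i) ((T ^ m) (r j)) :=
    h.apply_residual_nonneg (innerPow_isPosSemidef hT m) (innerPow_isSelfAdjoint hT.isSymmetric m)
      (h.alpha_ne_zero_of_isPositive hT hb hne) hi hj
  have residual_residual (i : ℕ) (hi : i ≤ ℓ) : ∀ j ≤ ℓ, 0 ≤ inner ℝ (r i) (r j) :=
    h.map_residual_nonneg_of_map_pow hα hβ hfin m (innerₗ E (r i)) (residual_pow_residual i hi)
  have direction_residual (i : ℕ) (hi : i ≤ ℓ) : 0 ≤ inner ℝ (p t) (r i) :=
    real_inner_comm (p t) (r i) ▸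
      h.map_direction_nonneg hβ (innerₗ E (r i)) (residual_residual i hi) t ht
  exact real_inner_comm (p t) (p s) ▸
    h.map_direction_nonneg hβ (innerₗ E (p t)) direction_residual s hs

theorem inner_iterate_direction_nonneg (h : IsCGIteration (innerPow T m) T b x r p ρ α β)
    (hT : T.IsPositive) (hne : ∀ k < ℓ, r k ≠ 0) (hfin : r ℓ = 0) {s t : ℕ} (hs : s ≤ ℓ)
    (ht : t ≤ ℓ) : 0 ≤ inner ℝ (x s) (p t) := by
  have hmono : inner ℝ (p t) (x 0) ≤ inner ℝ (p t) (x s) :=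
    h.map_iterate_monotoneOn (h.alpha_nonneg_of_isPositive hT) (innerₗ E (p t))
      (fun _ hk => h.inner_direction_nonneg hT hne hfin ht hk) ℓ.zero_le hs s.zero_le
  rwa [h.x_zero, inner_zero_right, real_inner_comm] at hmono

theorem inner_error_direction_nonneg (h : IsCGIteration (innerPow T m) T b x r p ρ α β)
    (hT : T.IsPositive) (hne : ∀ k < ℓ, r k ≠ 0) (hfin : r ℓ = 0) {xstar : E}
    (hxstar : T xstar = b) {s t : ℕ} (hs : s ≤ ℓ) (ht : t ≤ ℓ) :
    0 ≤ inner ℝ (xstar - x s) (p t) := by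
  have hmono : inner ℝ (p t) (x s) ≤ inner ℝ (p t) (x ℓ) :=
    h.map_iterate_monotoneOn (h.alpha_nonneg_of_isPositive hT) (innerₗ E (p t))
      (fun _ hk => h.inner_direction_nonneg hT hne hfin ht hk) hs Set.self_mem_Iic hs
  -- `T` may be singular, but `xstar - x ℓ` lies in its kernel and the directions in its range.
  have horth : inner ℝ (p t) (xstar - x ℓ) = 0 := by
    obtain ⟨y, hy⟩ := h.direction_mem_range ⟨xstar, hxstar⟩ t
    rw [← hy, hT.isSymmetric, map_sub, hxstar, ← h.residual_eq, hfin, inner_zero_right]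
  rw [inner_sub_right] at horth
  rw [real_inner_comm, inner_sub_right]
  linarith

theorem norm_iterate_monotoneOn (h : IsCGIteration (innerPow T m) T b x r p ρ α β)
    (hT : T.IsPositive) (hne : ∀ k < ℓ, r k ≠ 0) (hfin : r ℓ = 0) :
    MonotoneOn (fun k => ‖x k‖) (Set.Iic ℓ) := fun s hs _ ht hst =>
  norm_le_norm_of_inner_self_le_inner <|
    h.map_iterate_monotoneOn (h.alpha_nonneg_of_isPositive hT) (innerₗ E (x s))
      (fun _ hk => h.inner_iterate_direction_nonneg hT hne hfin hs hk) hs ht hst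

theorem norm_error_antitoneOn (h : IsCGIteration (innerPow T m) T b x r p ρ α β)
    (hT : T.IsPositive) (hne : ∀ k < ℓ, r k ≠ 0) (hfin : r ℓ = 0) {xstar : E}
    (hxstar : T xstar = b) : AntitoneOn (fun k => ‖xstar - x k‖) (Set.Iic ℓ) := by
  intro s hs t ht hst
  have hmono : inner ℝ (xstar - x t) (x s) ≤ inner ℝ (xstar - x t) (x t) :=
    h.map_iterate_monotoneOn (h.alpha_nonneg_of_isPositive hT) (innerₗ E (xstar - x t))
      (fun _ hk => h.inner_error_direction_nonneg hT hne hfin hxstar ht hk) hs ht hst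
  refine norm_le_norm_of_inner_self_le_inner ?_
  rw [inner_sub_right _ xstar, inner_sub_right _ xstar]
  exact sub_le_sub_left hmono _

end IsCGIteration

theorem inner_toEuclideanLin_pow {ι : Type*} [Fintype ι] [DecidableEq ι] (A : Matrix ι ι ℝ)
    (m : ℕ) (u v : EuclideanSpace ℝ ι) :
    inner ℝ u ((A.toEuclideanLin ^ m) v) = u ⬝ᵥ (A ^ m) *ᵥ v := by
  rw [← toLpLin_pow, EuclideanSpace.inner_eq_star_dotProduct, ofLp_toLpLin, dotProduct_comm]
  rfl

theorem pow_mulVec_dotProduct_pow_mulVec {ι R : Type*} [Fintype ι] [DecidableEq ι] [CommSemiring R]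
    {A : Matrix ι ι R} (hA : A.IsSymm) (i j : ℕ) (u v : ι → R) :
    (A ^ i) *ᵥ u ⬝ᵥ (A ^ j) *ᵥ v = u ⬝ᵥ (A ^ (i + j)) *ᵥ v := by
  rw [dotProduct_comm, dotProduct_mulVec, ← mulVec_transpose, (hA.pow i).eq, dotProduct_comm,
    mulVec_mulVec, pow_add]

theorem car_iterate_and_error_norms_monotone_general {E : Type*} [NormedAddCommGroup E]
    [InnerProductSpace ℝ E] {T : E →ₗ[ℝ] E} (hT : T.IsPositive) {m ℓ : ℕ} {b xstar : E}
    (hxstar : T xstar = b) {x r p : ℕ → E} {ρ α β : ℕ → ℝ}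
    (h : IsCGIteration (innerPow T m) T b x r p ρ α β)
    (hne : ∀ k < ℓ, r k ≠ 0) (hfin : r ℓ = 0) :
    MonotoneOn (fun k => ‖x k‖) (Set.Iic ℓ) ∧ AntitoneOn (fun k => ‖xstar - x k‖) (Set.Iic ℓ) :=
  ⟨h.norm_iterate_monotoneOn hT hne hfin, h.norm_error_antitoneOn hT hne hfin hxstar⟩

/-- Paper: Theorem 6.4 (first two items).  For the cAr (equivalently MinAres) iteration on
an SPD system `A x = b` with exact solution `x* = A⁻¹ b`, the iterate norms `‖x_k‖`
increase monotonically and the error norms `‖x* − x_k‖` decrease monotonically. -/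
theorem car_iterate_and_error_norms_monotone (n ℓ : ℕ) (hℓn : ℓ ≤ n)
    (A : Matrix (Fin n) (Fin n) ℝ) (hA : A.PosDef) (b : EuclideanSpace ℝ (Fin n))
    (x r p : ℕ → EuclideanSpace ℝ (Fin n)) (ρ α β : ℕ → ℝ)
    (xstar : EuclideanSpace ℝ (Fin n)) (hxstar : xstar = A⁻¹.mulVec b)
    (hx0 : x 0 = 0) (hr0 : r 0 = b) (hp0 : p 0 = b)
    (hρ : ∀ k, ρ k = r k ⬝ᵥ (A ^ 3).mulVec (r k))
    (hα : ∀ k, α k = ρ k / ((A ^ 2).mulVec (p k) ⬝ᵥ (A ^ 2).mulVec (p k)))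
    (hx : ∀ k, x (k + 1) = x k + α k • p k)
    (hr : ∀ k, r (k + 1)
            = r k - α k • (EuclideanSpace.equiv (Fin n) ℝ).symm (A.mulVec (p k)))
    (hβ : ∀ k, β k = ρ (k + 1) / ρ k)
    (hp : ∀ k, p (k + 1) = r (k + 1) + β k • p k)
    (hne : ∀ k < ℓ, r k ≠ 0) (hfin : r ℓ = 0) :
    ∀ k, 1 ≤ k → k ≤ ℓ → ‖x (k - 1)‖ ≤ ‖x k‖ ∧ ‖xstar - x k‖ ≤ ‖xstar - x (k - 1)‖ := by
  have hcar : IsCGIteration (innerPow A.toEuclideanLin 3) A.toEuclideanLin b x r p ρ α β :=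
    { x_zero := hx0
      r_zero := hr0
      p_zero := hp0
      rho_eq k := by rw [hρ, innerPow_apply, inner_toEuclideanLin_pow]
      alpha_eq k := by
        rw [hα, pow_mulVec_dotProduct_pow_mulVec (isHermitian_iff_isSymm.1 hA.isHermitian),
          innerPow_apply_map, innerPow_apply, inner_toEuclideanLin_pow]
      x_succ := hx
      r_succ := hr
      beta_eq := hβ
      p_succ := hp }
  have hsolution : A.toEuclideanLin xstar = b := by
    apply WithLp.ofLp_injective 2
    rw [ofLp_toLpLin, toLin'_apply, hxstar, mulVec_mulVec, mul_nonsing_inv _ hA.det_pos.ne'.isUnit,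
      one_mulVec]
  have hpositive := isPositive_toEuclideanLin_iff.2 hA.posSemidef
  obtain ⟨hmono, hanti⟩ :=
    car_iterate_and_error_norms_monotone_general hpositive hsolution hcar hne hfin
  intro k _ hk
  have hk' : k - 1 ≤ ℓ := (k.sub_le 1).trans hk
  exact ⟨hmono hk' hk (k.sub_le 1), hanti hk' hk (k.sub_le 1)⟩
end
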